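/- arXiv:2005.07113 — 3 statements merged into one kernel-verified Lean document; each statement's English description precedes it below -/
import Mathlib

section
/- Fix integers a ≥ 1, g ≥ 0, ℓ ≥ 1, m ≥ 1, and set b = ℓ(a+g), M = m+ℓ, n = Ma, N = (M−1)(a+g)+a. Let σ(j) = ⌊j/a⌋·(a+g) + (j mod a) for j ∈ {0,…,n−1} and f_S(j) = max{i ∈ {0,…,n−1} : σ(i) ≤ j} for j ∈ {0,…,N−1}. Then for every i ∈ {0,…,n−1}, the image under f_S of the burst window {j : σ(i) ≤ j ≤ min(σ(i)+b−1, N−1)} equals the interval of consecutive indices {i, i+1, …, min(i+ℓa−1, n−1)}; in particular, a burst of b consecutive erasures starting at σ(i) erases exactly ℓa consecutive symbols of the base codeword whenever i + ℓa − 1 ≤ n−1. -/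
/-!
Call `x` a cut of an increasing sequence `σ` at `k` if `σ p < x` holds exactly for `p < k`. Rounding
down along `σ` sends `[σ i, x)` onto `[i, k)`: each `p` is the image of `σ p`, and the rounded index
`p` of `j < x` has `σ p ≤ j < x`. The burst window ends at the smaller of two cuts, one because
`σ (i + ℓa) = σ i + ℓ(a + g)`, the other because the last symbol sits at `σ (Ma - 1) = N - 1`.
-/

open Set

/-- The index at which `σ 0, …, σ (n - 1)` is rounded down at `j`: the map `f_S` when `σ` enumerates
the placement set `S`. The value is `0` when no index `p < n` has `σ p ≤ j`. -/
def floorIndex {α : Type*} [LE α] [DecidableLE α] (σ : ℕ → α) (n : ℕ) (j : α) : ℕ :=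
  Nat.findGreatest (fun p => σ p ≤ j) (n - 1)

/-- The enumeration `σ` of the placement set: blocks of `a` consecutive positions, each followed by
a gap of length `g`. -/
def placement (a g j : ℕ) : ℕ :=
  j / a * (a + g) + j % a

section FloorIndex

variable {α : Type*} {σ : ℕ → α} {n p : ℕ} {j : α}

theorem le_floorIndex [LE α] [DecidableLE α] (hp : p < n) (hj : σ p ≤ j) :
    p ≤ floorIndex σ n j :=
  Nat.le_findGreatest (Nat.le_sub_one_of_lt hp) hj

theorem apply_floorIndex_le [LE α] [DecidableLE α] (hp : p < n) (hj : σ p ≤ j) :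
    σ (floorIndex σ n j) ≤ j :=
  Nat.findGreatest_spec (P := fun q => σ q ≤ j) (Nat.le_sub_one_of_lt hp) hj

theorem floorIndex_apply [Preorder α] [DecidableLE α] (hσ : StrictMono σ) (hp : p < n) :
    floorIndex σ n (σ p) = p :=
  Nat.findGreatest_eq_iff.2
    ⟨Nat.le_sub_one_of_lt hp, fun _ => le_rfl, fun _ hq _ => (hσ hq).not_ge⟩

theorem image_floorIndex_Ico [Preorder α] [DecidableLE α] (hσ : StrictMono σ) {i k : ℕ} {x : α}
    (hkn : k ≤ n) (hx : ∀ p, σ p < x ↔ p < k) :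
    floorIndex σ n '' Ico (σ i) x = Ico i k := by
  apply Subset.antisymm
  · rintro _ ⟨j, ⟨hij, hjx⟩, rfl⟩
    have hin : i < n := ((hx i).1 (hij.trans_lt hjx)).trans_le hkn
    exact ⟨le_floorIndex hin hij, (hx _).1 ((apply_floorIndex_le hin hij).trans_lt hjx)⟩
  · rintro p ⟨hip, hpk⟩
    exact ⟨σ p, ⟨hσ.monotone hip, (hx p).2 hpk⟩, floorIndex_apply hσ (hpk.trans_le hkn)⟩

end FloorIndex

section Placement

variable (a g : ℕ)

theorem placement_eq_add (j : ℕ) : placement a g j = j + j / a * g := by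
  calc j / a * (a + g) + j % a = (j / a * a + j % a) + j / a * g := by ring
    _ = j + j / a * g := by rw [Nat.div_add_mod']

theorem placement_strictMono : StrictMono (placement a g) := by
  intro p q hpq
  rw [placement_eq_add, placement_eq_add]
  exact add_lt_add_of_lt_of_le hpq (Nat.mul_le_mul_right g (Nat.div_le_div_right hpq.le))

theorem placement_of_lt {j : ℕ} (hj : j < a) : placement a g j = j := by
  simp [placement, Nat.div_eq_of_lt hj, Nat.mod_eq_of_lt hj]

theorem placement_add_mul (ha : 0 < a) (i ℓ : ℕ) :
    placement a g (i + ℓ * a) = placement a g i + ℓ * (a + g) := by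
  simp only [placement, Nat.add_mul_div_right _ _ ha, Nat.add_mul_mod_self_right]
  ring

theorem placement_lt_iff (ha : 0 < a) (K p : ℕ) :
    placement a g p < K * (a + g) + a ↔ p < (K + 1) * a := by
  have hlast : placement a g (a - 1 + K * a) = a - 1 + K * (a + g) := by
    rw [placement_add_mul a g ha, placement_of_lt a g (Nat.sub_one_lt_of_lt ha)]
  have hN : K * (a + g) + a = placement a g (a - 1 + K * a) + 1 := by
    rw [hlast]
    omega
  have hn : (K + 1) * a = a - 1 + K * a + 1 := by
    rw [Nat.succ_mul]
    omega
  rw [hN, hn, Nat.lt_add_one_iff, Nat.lt_add_one_iff, (placement_strictMono a g).le_iff_le]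

end Placement

theorem Icc_min_sub_one_eq_Ico_min (x : ℕ) {y z : ℕ} (hy : 0 < y) (hz : 0 < z) :
    Icc x (min (y - 1) (z - 1)) = Ico x (min y z) := by
  ext j
  simp only [mem_Icc, mem_Ico, le_min_iff, lt_min_iff, Nat.le_sub_one_iff_lt hy,
    Nat.le_sub_one_iff_lt hz]

theorem burst_window_image_general (a g ℓ M i : ℕ) (ha : 0 < a) (hM : 0 < M) :
    floorIndex (placement a g) (M * a) ''
        Ico (placement a g i) (min (placement a g i + ℓ * (a + g)) ((M - 1) * (a + g) + a))
      = Ico i (min (i + ℓ * a) (M * a)) := by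
  refine image_floorIndex_Ico (placement_strictMono a g) (min_le_right _ _) fun p => ?_
  rw [lt_min_iff, lt_min_iff, placement_lt_iff a g ha, Nat.sub_add_cancel hM,
    ← placement_add_mul a g ha, (placement_strictMono a g).lt_iff_lt]

/-- With `b = ℓ(a+g)`, `M = m+ℓ`, `n = Ma`, `N = (M−1)(a+g)+a`,
`σ(j) = (j/a)(a+g) + (j mod a)` the increasing enumeration of the placement
set and `f_S(j) = max{i ≤ n−1 : σ(i) ≤ j}`, the image under `f_S` of the burst
window `{j : σ(i) ≤ j ≤ min(σ(i)+b−1, N−1)}` equals the interval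
`{i, …, min(i+ℓa−1, n−1)}`, for every `i < n`. -/
theorem burst_window_image
    (a g ℓ m : ℕ) (ha : 1 ≤ a) (hℓ : 1 ≤ ℓ) (hm : 1 ≤ m) :
    ∀ i : ℕ, i < (m + ℓ) * a →
      (fun j : ℕ =>
          Nat.findGreatest
            (fun i' : ℕ => (i' / a) * (a + g) + i' % a ≤ j) ((m + ℓ) * a - 1)) ''
        Set.Icc ((i / a) * (a + g) + i % a)
          (min ((i / a) * (a + g) + i % a + ℓ * (a + g) - 1)
               ((m + ℓ - 1) * (a + g) + a - 1))
      = Set.Icc i (min (i + ℓ * a - 1) ((m + ℓ) * a - 1)) := by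
  intro i _
  rw [Icc_min_sub_one_eq_Ico_min _ (by positivity) (by positivity),
    Icc_min_sub_one_eq_Ico_min _ (by positivity) (by positivity)]
  exact burst_window_image_general a g ℓ (m + ℓ) i ha (by positivity)
end

section
/- Let a ≤ b ≤ τ be positive integers with gcd(b, τ+1−a) = a+g ≥ a for some integer g ≥ 0, and set ℓ = b/(a+g), m = (τ+1−a)/(a+g), ρ = (m+1)a, r = ℓa, n = (m+ℓ)a, k = ma. Let F be a field, Z = [Z1 | Z2] an a×2a zero-band MDS generator matrix over F, and C an r×(ρ−r) super-regular matrix over F, and let H be the r×n parity-check matrix of the code C_{a,r,ρ} of Construction 1. Let S_{a,b,τ} = ∪_{i=0}^{m+ℓ−1}{i(a+g),…,i(a+g)+a−1} and N = (m+ℓ−1)(a+g)+a. Then the packet-level code SDE(ker H, S_{a,b,τ}) with dispersion span N is an (a,b,τ) streaming code, and its rate k/n equals the optimal rate (τ+1−a)/(τ+1−a+b). -/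
/-- The parity-check matrix `H` of the code `C_{a,r,ρ}` of Construction 1
(with `r = ℓa`): `H(0:a−1, 0:a−1) = I_a`; `H(ia:ia+a−1, ia:ia+a−1) = Z1` for
`i ∈ {1,…,ℓ−1}`; `H(0:r−1, r:ρ−1) = C`;
`H(ia:ia+a−1, ρ+(i−1)a:ρ+ia−1) = Z2` for `i ∈ {1,…,ℓ−1}`; all other entries
zero. -/
def constructionOneH (F : Type*) [Field F] (a ℓ ρ : ℕ) (ha : 0 < a)
    (Z1 Z2 : Matrix (Fin a) (Fin a) F)
    (C : Matrix (Fin (ℓ * a)) (Fin (ρ - ℓ * a)) F) :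
    Matrix (Fin (ℓ * a)) (Fin (ρ - a + ℓ * a)) F :=
  Matrix.of fun u v =>
    if hv1 : (v : ℕ) < ℓ * a then
      if (u : ℕ) / a = (v : ℕ) / a then
        if (v : ℕ) < a then (if (u : ℕ) = (v : ℕ) then 1 else 0)
        else Z1 ⟨(u : ℕ) % a, Nat.mod_lt _ ha⟩ ⟨(v : ℕ) % a, Nat.mod_lt _ ha⟩
      else 0
    else if hv2 : (v : ℕ) < ρ then
      C u ⟨(v : ℕ) - ℓ * a, by omega⟩
    else
      if (u : ℕ) / a = ((v : ℕ) - ρ) / a + 1 then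
        Z2 ⟨(u : ℕ) % a, Nat.mod_lt _ ha⟩ ⟨((v : ℕ) - ρ) % a, Nat.mod_lt _ ha⟩
      else 0

/-!
Subtracting two streams and reading off the diagonal that meets time `t` in position `p` reduces the
streaming property to one codeword `V` of the base code. It vanishes before `p` and, if `p` lies in
the `i`-th block of length `a`, at all unerased positions before `ρ + ia`; one has to show that
`V p = 0`.

For a burst, a check involves only the columns of `C` as soon as its symbols under `I` or `Z1` that
the zero band leaves precede the burst, and those under `Z2` follow it. There are at least as many
such checks as erased columns of `C`, so super-regularity determines these columns. For at most `a`
erasures the first `a` checks suffice for this. Then at most `a` of the `2a` symbols in the block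
row of `p` are unknown, and the MDS property of `Z` recovers them.
-/

open scoped Finset Matrix

theorem extend_zero_apply_eq_zero {α β M : Type*} [Zero M] {f : α → β} {v : α → M} {k : β}
    (hk : ∀ i, f i = k → v i = 0) : Function.extend f v (0 : β → M) k = 0 := by
  classical
  rw [Function.extend_def]
  split_ifs with h
  · exact hk _ h.choose_spec
  · rfl

section LinearAlgebra

variable {m n R : Type*}

theorem submatrix_mulVec_comp {m' n' : Type*} [NonUnitalNonAssocSemiring R] [Fintype n]
    [Fintype n'] (M : Matrix m n R) (f : m' → m) {e : n' → n} (he : Function.Injective e)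
    {w : n → R} (hw : ∀ j ∉ Set.range e, w j = 0) :
    M.submatrix f e *ᵥ (w ∘ e) = (M *ᵥ w) ∘ f :=
  funext fun i =>
    Fintype.sum_of_injective e he _ (fun j => M (f i) j * w j)
      (fun j hj => by rw [hw j hj, mul_zero]) fun _ => rfl

theorem eq_zero_of_mulVec_eq_zero_of_card_le [CommRing R] [Fintype n] {M : Matrix m n R} {s : ℕ}
    (hM : ∀ cols : Finset n, #cols = s → LinearIndependent R fun j : cols => fun u => M u j)
    (hs : s ≤ Fintype.card n) {K : Finset n} (hK : #K ≤ s) {w : n → R}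
    (hw : ∀ j ∉ K, w j = 0) (hMw : M *ᵥ w = 0) : w = 0 := by
  obtain ⟨cols, hKcols, hcols⟩ := Finset.exists_superset_card_eq hK hs
  have hw_cols : ∀ j ∉ cols, w j = 0 := fun j hj => hw j (mt (@hKcols j) hj)
  have hrestrict : M.submatrix id (Subtype.val : cols → n) *ᵥ (w ∘ Subtype.val) = 0 := by
    rw [submatrix_mulVec_comp M id Subtype.val_injective (by simpa using hw_cols), hMw]
    rfl
  have hinj := Matrix.mulVec_injective_iff.2 (hM cols hcols)
  have hw_on : w ∘ (Subtype.val : cols → n) = 0 :=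
    hinj (hrestrict.trans (Matrix.mulVec_zero _).symm)
  funext j
  by_cases hj : j ∈ cols
  · exact congrFun hw_on ⟨j, hj⟩
  · exact hw_cols j hj

/-- A super-regular matrix: every square submatrix has nonzero determinant. Submatrices are given
by injective, not necessarily increasing, selections of rows and columns, which affects
determinants by a sign only. -/
def IsSuperregular [CommRing R] (C : Matrix m n R) : Prop :=
  ∀ (s : ℕ) (ri : Fin s → m) (ci : Fin s → n),
    Function.Injective ri → Function.Injective ci → (C.submatrix ri ci).det ≠ 0

theorem IsSuperregular.eq_zero_of_card_le [CommRing R] [IsDomain R] [Fintype n]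
    {C : Matrix m n R} (hC : IsSuperregular C) {rows : Finset m} {cols : Finset n}
    (hcard : #cols ≤ #rows) {w : n → R} (hw : ∀ j ∉ cols, w j = 0)
    (hCw : ∀ i ∈ rows, (C *ᵥ w) i = 0) : w = 0 := by
  obtain ⟨rows', hsub, hcard'⟩ := Finset.exists_subset_card_eq hcard
  let ri : Fin #cols → m := Subtype.val ∘ (rows'.equivFinOfCardEq hcard').symm
  let ci : Fin #cols → n := Subtype.val ∘ cols.equivFin.symm
  have hri : Function.Injective ri := Subtype.val_injective.comp (Equiv.injective _)
  have hci : Function.Injective ci := Subtype.val_injective.comp (Equiv.injective _)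
  have hrange : Set.range ci = cols := by
    rw [EquivLike.range_comp, Subtype.range_coe_subtype, Finset.setOfPred_mem]
  have hrestrict : C.submatrix ri ci *ᵥ (w ∘ ci) = 0 := by
    rw [submatrix_mulVec_comp C ri hci (by simpa [hrange] using hw)]
    exact funext fun i => hCw _ (hsub (Subtype.prop _))
  have hw_on : w ∘ ci = 0 := Matrix.eq_zero_of_mulVec_eq_zero (hC _ ri ci hri hci) hrestrict
  funext j
  by_cases hj : j ∈ cols
  · obtain ⟨i, rfl⟩ : j ∈ Set.range ci := hrange ▸ hj
    exact congrFun hw_on i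
  · exact hw j hj

end LinearAlgebra

section ZeroBandMDS

variable {R : Type*} {a : ℕ}

/-- A zero-band MDS generator matrix: any `a` columns are linearly independent, and row `i`
vanishes in the `a - 1` columns that cyclically follow column `i`. -/
structure IsZeroBandMDS [Semiring R] (Z : Matrix (Fin a) (Fin (2 * a)) R) : Prop where
  eq_zero_of_band : ∀ (i : Fin a) (j : Fin (2 * a)),
    (∃ s : ℕ, 1 ≤ s ∧ s ≤ a - 1 ∧ (j : ℕ) = ((i : ℕ) + s) % (2 * a)) → Z i j = 0
  linearIndependent : ∀ cols : Finset (Fin (2 * a)), #cols = a →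
    LinearIndependent R (fun j : cols => fun u => Z u (j : Fin (2 * a)))

/-- The left `a × a` half of an `a × 2a` matrix, the paper's `Z1`. -/
def leftHalf (Z : Matrix (Fin a) (Fin (2 * a)) R) : Matrix (Fin a) (Fin a) R :=
  Matrix.of fun i j => Z i ⟨j, by omega⟩

/-- The right `a × a` half of an `a × 2a` matrix, the paper's `Z2`. -/
def rightHalf (Z : Matrix (Fin a) (Fin (2 * a)) R) : Matrix (Fin a) (Fin a) R :=
  Matrix.of fun i j => Z i ⟨a + j, by omega⟩

namespace IsZeroBandMDS

theorem leftHalf_mulVec_apply_eq_zero [Semiring R] {Z : Matrix (Fin a) (Fin (2 * a)) R}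
    (hZ : IsZeroBandMDS Z) {v : Fin a → R} {e : Fin a} (hv : ∀ f ≤ e, v f = 0) :
    (leftHalf Z *ᵥ v) e = 0 := by
  rw [Matrix.mulVec, dotProduct]
  refine Finset.sum_eq_zero fun f _ => ?_
  rcases le_or_gt f e with hfe | hef
  · rw [hv f hfe, mul_zero]
  · have : leftHalf Z e f = 0 := hZ.eq_zero_of_band e _
      ⟨f - e, by omega, by omega, by rw [Nat.mod_eq_of_lt] <;> grind⟩
    rw [this, zero_mul]

theorem rightHalf_mulVec_apply_eq_zero [Semiring R] {Z : Matrix (Fin a) (Fin (2 * a)) R}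
    (hZ : IsZeroBandMDS Z) {v : Fin a → R} {e : Fin a} (hv : ∀ f ≥ e, v f = 0) :
    (rightHalf Z *ᵥ v) e = 0 := by
  rw [Matrix.mulVec, dotProduct]
  refine Finset.sum_eq_zero fun f _ => ?_
  rcases le_or_gt e f with hef | hfe
  · rw [hv f hef, mul_zero]
  · have : rightHalf Z e f = 0 := hZ.eq_zero_of_band e _
      ⟨a + f - e, by omega, by omega, by rw [Nat.mod_eq_of_lt] <;> grind⟩
    rw [this, zero_mul]

theorem elim_eq_zero_of_card_le [CommRing R] {Z : Matrix (Fin a) (Fin (2 * a)) R}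
    (hZ : IsZeroBandMDS Z) {v w : Fin a → R} (hvw : leftHalf Z *ᵥ v + rightHalf Z *ᵥ w = 0)
    {K : Finset (Fin a ⊕ Fin a)} (hK : #K ≤ a) (hK_zero : ∀ j ∉ K, Sum.elim v w j = 0) :
    Sum.elim v w = 0 := by
  let halves : Fin a ⊕ Fin a ≃ Fin (2 * a) := finSumFinEquiv.trans (finCongr (two_mul a).symm)
  have hcols : Z.submatrix id halves = Matrix.fromCols (leftHalf Z) (rightHalf Z) := by
    ext i (j | j) <;> rfl
  have hZvw : Z *ᵥ (Sum.elim v w ∘ halves.symm) = 0 := by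
    have := Matrix.submatrix_mulVec_equiv Z (Sum.elim v w) id halves
    rwa [hcols, Matrix.fromCols_mulVec_sumElim, hvw, Function.comp_id, eq_comm] at this
  have h := eq_zero_of_mulVec_eq_zero_of_card_le hZ.linearIndependent
    (by rw [Fintype.card_fin]; omega) (K := K.map halves.toEmbedding) (by rwa [Finset.card_map])
    (fun j hj => hK_zero _ (by simpa [Finset.mem_map_equiv] using hj)) hZvw
  exact (Equiv.comp_symm_eq halves 0 _).1 h

end IsZeroBandMDS

end ZeroBandMDS

section StreamingCode

variable {ι A : Type*}

/-- The streaming dispersion encoding of a base code `C`: the packet streams whose diagonals are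
codewords. The placement set `{s₀ < s₁ < ⋯}` is given by its enumeration `σ`. -/
def sde (C : Set (ι → A)) (σ : ι → ℕ) : Set (ℤ → ι → A) :=
  {x | ∀ t : ℤ, (fun i => x (t + (σ i : ℤ)) i) ∈ C}

/-- An `(a, b, τ)` streaming code: each packet is determined with delay `τ` by the earlier packets,
if the erasures in its window number at most `a` or lie in a burst of length `b`. -/
def IsStreamingCode (a b τ : ℕ) (X : Set (ℤ → ι → A)) : Prop :=
  ∀ (t : ℤ) (E : Finset ℤ), (↑E ⊆ Set.Icc t (t + (τ : ℤ))) → t ∈ E →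
    (#E ≤ a ∨ ∀ e ∈ E, e ≤ t + (b : ℤ) - 1) →
    ∀ x y : ℤ → ι → A, x ∈ X → y ∈ X →
      (∀ t' : ℤ, t' < t → x t' = y t') →
      (∀ t' : ℤ, t' ∈ Set.Icc t (t + (τ : ℤ)) → t' ∉ E → x t' = y t') →
      x t = y t

-- The diagonal that meets time `t` in position `p` starts at `t - σ p`.
theorem isStreamingCode_sde [LinearOrder ι] [AddGroup A] {S : Type*} [SetLike S (ι → A)]
    [AddSubgroupClass S (ι → A)] {a b τ : ℕ} {σ : ι → ℕ} (hσ : StrictMono σ) (C : S)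
    (hC : ∀ v ∈ C, ∀ p, (∀ k < p, v k = 0) →
      ((∃ K : Finset ι, #K ≤ a ∧ ∀ k ∉ K, σ k ≤ σ p + τ → v k = 0) ∨
        ∀ k, σ p + b ≤ σ k → σ k ≤ σ p + τ → v k = 0) → v p = 0) :
    IsStreamingCode a b τ (sde (C : Set (ι → A)) σ) := by
  intro t E _ _ hE x y hx hy hpast hwindow
  funext p
  let time : ι → ℤ := fun k => t - σ p + σ k
  let v : ι → A := fun k => x (time k) k - y (time k) k
  have hv_mem : v ∈ C := sub_mem (hx (t - σ p)) (hy (t - σ p))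
  have hv_past : ∀ k < p, v k = 0 := fun k hk => by
    have := hσ hk
    exact sub_eq_zero.2 (congrFun (hpast (time k) (by grind)) k)
  have hv_window : ∀ k, time k ∉ E → σ k ≤ σ p + τ → v k = 0 := fun k hkE hk => by
    rcases lt_or_ge k p with hkp | hpk
    · exact hv_past k hkp
    · have := hσ.monotone hpk
      exact sub_eq_zero.2 (congrFun (hwindow (time k) ⟨by grind, by grind⟩ hkE) k)
  have hvp : v p = 0 := by
    refine hC v hv_mem p hv_past (hE.imp (fun hcard => ?_) fun hburst k hbk => ?_)
    · have htime_inj : Function.Injective time := fun k k' h => hσ.injective (by grind)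
      refine ⟨E.preimage time htime_inj.injOn, ?_, fun k hk => hv_window k (by simpa using hk)⟩
      exact (Finset.card_le_card_of_injOn time (by simp [Set.MapsTo]) htime_inj.injOn).trans hcard
    · exact hv_window k fun hk => by grind
  simpa [v, time, sub_eq_zero] using hvp

end StreamingCode

section BlockPlacement

/-- The increasing enumeration of `⋃ i, {iq, …, iq + a - 1}`, the placement set `S_{a,b,τ}` when
`q = a + g`. -/
def blockPlacement (a q k : ℕ) : ℕ :=
  k / a * q + k % a

variable {a q : ℕ}

theorem strictMono_blockPlacement (ha : 0 < a) (haq : a ≤ q) : StrictMono (blockPlacement a q) := by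
  intro k k' hkk'
  rcases (Nat.div_le_div_right hkk'.le : k / a ≤ k' / a).eq_or_lt with hdiv | hdiv
  · have hmod : k % a < k' % a := by
      have hk := Nat.div_add_mod k a
      have hk' := Nat.div_add_mod k' a
      rw [hdiv] at hk
      omega
    simpa [blockPlacement, hdiv] using hmod
  · calc k / a * q + k % a < k / a * q + q := by have := Nat.mod_lt k ha; omega
      _ = (k / a + 1) * q := by ring
      _ ≤ k' / a * q := Nat.mul_le_mul_right q hdiv
      _ ≤ k' / a * q + k' % a := Nat.le_add_right _ _

theorem blockPlacement_add_mul (ha : 0 < a) (k i : ℕ) :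
    blockPlacement a q (k + i * a) = blockPlacement a q k + i * q := by
  rw [blockPlacement, blockPlacement, Nat.add_mul_div_right _ _ ha, Nat.add_mul_mod_self_right]
  ring

theorem blockPlacement_lt_of_lt_mul (ha : 0 < a) {k p i : ℕ} (hk : k < (i + 1) * a + p / a * a) :
    blockPlacement a q k < blockPlacement a q p + i * q + a := by
  have hdiv : k / a ≤ i + p / a :=
    Nat.le_of_lt_succ ((Nat.div_lt_iff_lt_mul ha).2 (by linarith))
  calc k / a * q + k % a < k / a * q + a := Nat.add_lt_add_left (Nat.mod_lt k ha) _
    _ ≤ (i + p / a) * q + a := by gcongr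
    _ ≤ p / a * q + p % a + i * q + a := by linarith [Nat.zero_le (p % a)]

end BlockPlacement

section ConstructionOne

variable {F : Type*} [Field F] {a ℓ ρ : ℕ}

/-- The part of a sequence that starts at position `s`; its length is read off the expected
type. -/
def subword {A : Type*} (V : ℕ → A) (s : ℕ) {len : ℕ} : Fin len → A :=
  fun k => V (s + k)

/-- The parity checks of Construction 1, for a word extended to a sequence on `ℕ`. Row `u < a` has
the identity block, row `u = (i + 1) a + e` has row `e` of both `Z₁` and `Z₂`. -/
structure ParityChecks (Z₁ Z₂ : Matrix (Fin a) (Fin a) F)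
    (C : Matrix (Fin (ℓ * a)) (Fin (ρ - ℓ * a)) F) (V : ℕ → F) : Prop where
  identity_row : ∀ u : Fin (ℓ * a), (u : ℕ) < a → V u + (C *ᵥ subword V (ℓ * a)) u = 0
  band_row : ∀ (u : Fin (ℓ * a)) (i : ℕ) (e : Fin a), (u : ℕ) = (i + 1) * a + e →
    (Z₁ *ᵥ subword V ((i + 1) * a)) e + (C *ᵥ subword V (ℓ * a)) u +
      (Z₂ *ᵥ subword V (ρ + i * a)) e = 0

theorem sum_fin_mul_ite_div_eq {M : Type*} [AddCommMonoid M] (g : ℕ → M) {N i : ℕ} (hi : i < N) :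
    ∑ v : Fin (N * a), (if (v : ℕ) / a = i then g v else 0) = ∑ f : Fin a, g (i * a + f) := by
  rw [← finProdFinEquiv.sum_comp, Fintype.sum_prod_type, Finset.sum_eq_single ⟨i, hi⟩]
  · refine Finset.sum_congr rfl fun f _ => ?_
    have hf : ((f : ℕ) + a * i) / a = i := by
      rw [Nat.add_mul_div_left _ _ f.pos, Nat.div_eq_of_lt f.isLt, zero_add]
    simp [finProdFinEquiv, hf, add_comm, mul_comm]
  · refine fun i' _ hi' => Finset.sum_eq_zero fun f _ => if_neg fun h => hi' (Fin.ext ?_)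
    simpa [finProdFinEquiv, Nat.add_mul_div_left _ _ f.pos, Nat.div_eq_of_lt f.isLt] using h
  · simp

theorem sum_columns_eq_add_add {M : Type*} [AddCommMonoid M] (hℓ : 0 < ℓ) (hρ : ℓ * a ≤ ρ)
    (f : Fin (ρ - a + ℓ * a) → M) :
    ∑ v, f v = ∑ v : Fin (ℓ * a), f ⟨v, by omega⟩ +
      ∑ k : Fin (ρ - ℓ * a), f ⟨ℓ * a + k, by have := Nat.le_mul_of_pos_left a hℓ; omega⟩ +
      ∑ v : Fin ((ℓ - 1) * a), f ⟨ρ + v, by have := Nat.sub_one_mul ℓ a; omega⟩ := by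
  have hlen : ℓ * a + (ρ - ℓ * a) + (ℓ - 1) * a = ρ - a + ℓ * a := by
    have := Nat.sub_one_mul ℓ a
    have := Nat.le_mul_of_pos_left a hℓ
    omega
  rw [← (finCongr hlen).sum_comp, Fin.sum_univ_add, Fin.sum_univ_add]
  refine congrArg₂ (· + ·) rfl (Finset.sum_congr rfl fun v _ => congrArg f (Fin.ext ?_))
  simp [Nat.add_sub_cancel' hρ]

section Rows

variable (ha : 0 < a) (Z₁ Z₂ : Matrix (Fin a) (Fin a) F)
  (C : Matrix (Fin (ℓ * a)) (Fin (ρ - ℓ * a)) F)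

theorem constructionOneH_mulVec_apply (hℓ : 0 < ℓ) (hρ : ℓ * a ≤ ρ) (V : ℕ → F)
    (u : Fin (ℓ * a)) :
    (constructionOneH F a ℓ ρ ha Z₁ Z₂ C *ᵥ fun v => V v) u =
      (∑ v : Fin (ℓ * a), if (v : ℕ) / a = u / a then
        (if (v : ℕ) < a then (if (u : ℕ) = v then 1 else 0)
          else Z₁ ⟨u % a, Nat.mod_lt _ ha⟩ ⟨v % a, Nat.mod_lt _ ha⟩) * V v else 0) +
      (C *ᵥ subword V (ℓ * a)) u +
      ∑ v : Fin ((ℓ - 1) * a), if (v : ℕ) / a + 1 = u / a then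
        Z₂ ⟨u % a, Nat.mod_lt _ ha⟩ ⟨v % a, Nat.mod_lt _ ha⟩ * V (ρ + v) else 0 := by
  rw [Matrix.mulVec, dotProduct, sum_columns_eq_add_add hℓ hρ]
  congr 1
  · congr 1
    · refine Finset.sum_congr rfl fun v _ => ?_
      simp [constructionOneH, eq_comm]
    · refine Finset.sum_congr rfl fun k _ => ?_
      have hk : ℓ * a + (k : ℕ) < ρ := by omega
      simp [constructionOneH, hk, subword]
  · refine Finset.sum_congr rfl fun v _ => ?_
    have hv : ¬ ρ + (v : ℕ) < ℓ * a := by omega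
    simp [constructionOneH, hv, eq_comm]

theorem parityChecks_of_mulVec_eq_zero (hℓ : 0 < ℓ) (hρ : ℓ * a ≤ ρ) {V : ℕ → F}
    (hV : (constructionOneH F a ℓ ρ ha Z₁ Z₂ C *ᵥ fun v => V v) = 0) :
    ParityChecks Z₁ Z₂ C V := by
  have hrow := fun u => (constructionOneH_mulVec_apply ha Z₁ Z₂ C hℓ hρ V u).symm.trans
    (congrFun hV u)
  constructor
  · intro u hu
    have hdiv : (u : ℕ) / a = 0 := Nat.div_eq_of_lt hu
    have h := hrow u
    simp only [hdiv] at h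
    rw [sum_fin_mul_ite_div_eq (fun v => (if v < a then (if (u : ℕ) = v then 1 else 0)
      else Z₁ ⟨u % a, Nat.mod_lt _ ha⟩ ⟨v % a, Nat.mod_lt _ ha⟩) * V v) hℓ] at h
    simpa [Fin.sum_univ_eq_sum_range (fun v => if (u : ℕ) = v then V v else 0), hu] using h
  · intro u i e hu
    have hdiv : (u : ℕ) / a = i + 1 := by
      rw [hu, add_comm, Nat.add_mul_div_right _ _ ha, Nat.div_eq_of_lt e.isLt, zero_add]
    have hmod : (u : ℕ) % a = e := by rw [hu, Nat.mul_add_mod_of_lt e.isLt]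
    have hi : i + 1 < ℓ := hdiv ▸ (Nat.div_lt_iff_lt_mul ha).2 u.isLt
    have hnot_lt : ∀ k, ¬ (i + 1) * a + k < a := fun k => by
      have : a ≤ (i + 1) * a := Nat.le_mul_of_pos_left a i.succ_pos
      omega
    have h := hrow u
    simp only [hdiv, hmod, add_left_inj] at h
    rw [sum_fin_mul_ite_div_eq (fun v => (if v < a then (if (u : ℕ) = v then 1 else 0)
        else Z₁ e ⟨v % a, Nat.mod_lt _ ha⟩) * V v) hi,
      sum_fin_mul_ite_div_eq (fun v => Z₂ e ⟨v % a, Nat.mod_lt _ ha⟩ * V (ρ + v))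
        (Nat.lt_sub_of_add_lt hi)] at h
    simpa [hnot_lt, Nat.mod_eq_of_lt, Matrix.mulVec, dotProduct, subword, add_assoc] using h

end Rows

namespace ParityChecks

variable {Z : Matrix (Fin a) (Fin (2 * a)) F} {C : Matrix (Fin (ℓ * a)) (Fin (ρ - ℓ * a)) F}
  {V : ℕ → F} {p : ℕ}

theorem mulVec_subword_apply_eq_zero_of_burst
    (hV : ParityChecks (leftHalf Z) (rightHalf Z) C V) (hZ : IsZeroBandMDS Z)
    (hpast : ∀ k < p, V k = 0) (hfuture : ∀ k, p + ℓ * a ≤ k → k < ρ + p / a * a → V k = 0)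
    {u : Fin (ℓ * a)} (hup : u < p) (hu : u < a ∨ p + ℓ * a + a ≤ ρ + u) :
    (C *ᵥ subword V (ℓ * a)) u = 0 := by
  rcases lt_or_ge (u : ℕ) a with hua | hua
  · simpa [hpast u hup] using hV.identity_row u hua
  have ha : 0 < a := Nat.pos_of_mul_pos_left (pos_of_gt u.isLt)
  obtain ⟨i, hi⟩ : ∃ i, (u : ℕ) / a = i + 1 :=
    Nat.exists_eq_add_one_of_ne_zero (Nat.div_pos hua ha).ne'
  obtain ⟨e, hue⟩ : ∃ e : Fin a, (u : ℕ) = (i + 1) * a + e :=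
    ⟨⟨u % a, Nat.mod_lt _ ha⟩, by rw [← hi, Nat.div_add_mod']⟩
  have hblock : (i + 1) * a ≤ p / a * a := by
    rw [← hi]
    gcongr
  have hleft : (leftHalf Z *ᵥ subword V ((i + 1) * a)) e = 0 :=
    hZ.leftHalf_mulVec_apply_eq_zero fun f hf => hpast _ (by omega)
  have hright : (rightHalf Z *ᵥ subword V (ρ + i * a)) e = 0 := by
    have := add_one_mul i a
    exact hZ.rightHalf_mulVec_apply_eq_zero fun f hf => hfuture _ (by omega) (by omega)
  simpa [hleft, hright] using hV.band_row u i e hue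

-- Each burst position outside the columns of `C` spoils at most one of the rows available to
-- `C`, so the remaining rows are at least as many as the unknown columns.
theorem subword_eq_zero_of_burst
    (hV : ParityChecks (leftHalf Z) (rightHalf Z) C V) (hZ : IsZeroBandMDS Z)
    (hC : IsSuperregular C) (hρ : ℓ * a ≤ ρ) (hpast : ∀ k < p, V k = 0)
    (hfuture : ∀ k, p + ℓ * a ≤ k → k < ρ + p / a * a → V k = 0) :
    (subword V (ℓ * a) : Fin (ρ - ℓ * a) → F) = 0 := by
  let rows : Finset (Fin (ℓ * a)) :=
    (Finset.range (min p (ℓ * a)) \ Finset.Ico a (p + ℓ * a + a - ρ)).attachFin (by grind)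
  let cols : Finset (Fin (ρ - ℓ * a)) :=
    (Finset.Ico (p - ℓ * a) (min p (ρ - ℓ * a))).attachFin (by simp)
  have hcard : #cols ≤ #rows := by
    have := Finset.le_card_sdiff (Finset.Ico a (p + ℓ * a + a - ρ))
      (Finset.range (min p (ℓ * a)))
    simp only [Finset.card_attachFin, Nat.card_Ico, Finset.card_range, rows, cols] at this ⊢
    omega
  refine hC.eq_zero_of_card_le hcard (fun k hk => ?_) fun u hu => ?_
  · simp only [Finset.mem_attachFin, Finset.mem_Ico, cols] at hk
    rcases lt_or_ge (ℓ * a + k) p with hkp | hpk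
    · exact hpast _ hkp
    · exact hfuture _ (by omega) (by omega)
  · simp only [Finset.mem_attachFin, Finset.mem_sdiff, Finset.mem_range, Finset.mem_Ico,
      rows] at hu
    exact hV.mulVec_subword_apply_eq_zero_of_burst hZ hpast hfuture (by omega) (by omega)

theorem subword_eq_zero_of_card_le {Z₁ Z₂ : Matrix (Fin a) (Fin a) F}
    (hV : ParityChecks Z₁ Z₂ C V) (hC : IsSuperregular C) (hℓ : 0 < ℓ)
    (hρ : ℓ * a ≤ ρ) {K : Finset ℕ} (hK : #K ≤ a) (hK_zero : ∀ k ∉ K, k < ρ → V k = 0) :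
    (subword V (ℓ * a) : Fin (ρ - ℓ * a) → F) = 0 := by
  have hℓa : a ≤ ℓ * a := Nat.le_mul_of_pos_left a hℓ
  let rows : Finset (Fin (ℓ * a)) := (Finset.range a \ K).attachFin (by grind)
  let cols : Finset (Fin (ρ - ℓ * a)) := {k | ℓ * a + (k : ℕ) ∈ K}
  have hcard : #cols ≤ #rows :=
    calc #cols ≤ #(K \ Finset.range a) :=
          Finset.card_le_card_of_injOn (fun k => ℓ * a + k)
            (fun k hk => by grind) fun k _ k' _ h => Fin.ext (by simpa using h)
      _ ≤ #(Finset.range a \ K) :=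
          Finset.card_sdiff_le_card_sdiff_iff.2 (by rwa [Finset.card_range])
      _ = #rows := (Finset.card_attachFin _ _).symm
  refine hC.eq_zero_of_card_le hcard (fun k hk => ?_) fun u hu => ?_
  · exact hK_zero _ (by simpa [cols] using hk) (by omega)
  · simp only [Finset.mem_attachFin, Finset.mem_sdiff, Finset.mem_range, rows] at hu
    simpa [hK_zero u hu.2 (by omega)] using hV.identity_row u hu.1

theorem elim_subword_eq_zero
    (hV : ParityChecks (leftHalf Z) (rightHalf Z) C V) (hZ : IsZeroBandMDS Z)
    (hsub : (subword V (ℓ * a) : Fin (ρ - ℓ * a) → F) = 0) {i : ℕ} (hi : i + 1 < ℓ)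
    (hρ : ℓ * a ≤ ρ) {K : Finset ℕ} (hK : #K ≤ a)
    (hleft : ∀ k ∉ K, (i + 1) * a ≤ k → k < (i + 1) * a + a → V k = 0)
    (hright : ∀ k ∉ K, ρ + i * a ≤ k → k < ρ + i * a + a → V k = 0) :
    Sum.elim (subword V ((i + 1) * a)) (subword V (ρ + i * a)) = (0 : Fin a ⊕ Fin a → F) := by
  let position : Fin a ⊕ Fin a → ℕ :=
    Sum.elim (fun f => (i + 1) * a + f) fun f => ρ + i * a + f
  have hblock : (i + 1) * a + a ≤ ℓ * a :=
    (Nat.succ_mul (i + 1) a).symm.trans_le (Nat.mul_le_mul_right a hi)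
  have hinj : Function.Injective position := by
    rintro (f | f) (f' | f') h <;> simp only [position, Sum.elim_inl, Sum.elim_inr,
      Sum.inl.injEq, Sum.inr.injEq, reduceCtorEq, Fin.ext_iff] at h ⊢
    all_goals
      have := Nat.succ_mul i a
      omega
  refine hZ.elim_eq_zero_of_card_le ?_ (K := K.preimage position hinj.injOn) ?_ ?_
  · funext e
    simpa [hsub] using hV.band_row ⟨(i + 1) * a + e, by omega⟩ i e rfl
  · exact (Finset.card_le_card_of_injOn position (by simp [Set.MapsTo]) hinj.injOn).trans hK
  · rintro (f | f) hf <;> rw [Finset.mem_preimage] at hf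
    · exact hleft _ hf (Nat.le_add_right _ _) (Nat.add_lt_add_left f.isLt _)
    · exact hright _ hf (Nat.le_add_right _ _) (Nat.add_lt_add_left f.isLt _)

theorem apply_eq_zero_of_le
    (hV : ParityChecks (leftHalf Z) (rightHalf Z) C V) (hZ : IsZeroBandMDS Z)
    (hρ : ℓ * a ≤ ρ) (hp : ρ ≤ p) (hp_lt : p < ρ - a + ℓ * a) (hpast : ∀ k < p, V k = 0) :
    V p = 0 := by
  have ha : 0 < a := Nat.pos_of_mul_pos_left (by omega : 0 < ℓ * a)
  obtain ⟨i, f, hpif⟩ : ∃ (i : ℕ) (f : Fin a), p = ρ + i * a + f :=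
    ⟨(p - ρ) / a, ⟨(p - ρ) % a, Nat.mod_lt _ ha⟩, by
      rw [add_assoc, Nat.div_add_mod', Nat.add_sub_cancel' hp]⟩
  have hi : i + 1 < ℓ := lt_of_mul_lt_mul_right (a := a) (by rw [add_one_mul]; omega) zero_le
  have hsub : (subword V (ℓ * a) : Fin (ρ - ℓ * a) → F) = 0 :=
    funext fun k => hpast _ (by omega)
  have hblock := hV.elim_subword_eq_zero hZ hsub hi hρ
    (K := Finset.Ico (ρ + i * a) (ρ + i * a + a)) (by simp)
    (fun k _ _ hk => hpast k (by have := Nat.mul_le_mul_right a hi; grind))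
    fun k hkK hk hk' => absurd (Finset.mem_Ico.2 ⟨hk, hk'⟩) hkK
  exact hpif ▸ congrFun hblock (Sum.inr f)

theorem apply_eq_zero_of_lt
    (hV : ParityChecks (leftHalf Z) (rightHalf Z) C V) (hZ : IsZeroBandMDS Z)
    (hsub : (subword V (ℓ * a) : Fin (ρ - ℓ * a) → F) = 0) (ha : 0 < a) (hℓ : 0 < ℓ)
    (hρ : ℓ * a ≤ ρ) (hp : p < ρ) {K : Finset ℕ} (hK : #K ≤ a)
    (hleft : ∀ k ∉ K, p / a * a ≤ k → k < p / a * a + a → V k = 0)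
    (hright : ∀ k ∉ K, ρ + p / a * a ≤ k + a → k < ρ + p / a * a → V k = 0) :
    V p = 0 := by
  rcases lt_or_ge p a with hpa | hap
  · have hpℓ : p < ℓ * a := hpa.trans_le (Nat.le_mul_of_pos_left a hℓ)
    simpa [hsub] using hV.identity_row ⟨p, hpℓ⟩ hpa
  rcases lt_or_ge p (ℓ * a) with hpℓ | hℓp
  · obtain ⟨i, hi⟩ : ∃ i, p / a = i + 1 :=
      Nat.exists_eq_add_one_of_ne_zero (Nat.div_pos hap ha).ne'
    have hiℓ : i + 1 < ℓ := hi ▸ (Nat.div_lt_iff_lt_mul ha).2 hpℓ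
    rw [hi] at hleft hright
    have hblock := hV.elim_subword_eq_zero hZ hsub hiℓ hρ hK hleft fun k hk hik hki =>
      hright k hk (by rw [add_one_mul]; omega) (by rw [add_one_mul]; omega)
    have hp_eq : (i + 1) * a + p % a = p := by rw [← hi, Nat.div_add_mod']
    exact hp_eq ▸ congrFun hblock (Sum.inl ⟨p % a, Nat.mod_lt p ha⟩)
  · simpa [subword, hℓp] using congrFun hsub ⟨p - ℓ * a, by omega⟩

theorem apply_eq_zero_of_burst
    (hV : ParityChecks (leftHalf Z) (rightHalf Z) C V) (hZ : IsZeroBandMDS Z)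
    (hC : IsSuperregular C) (ha : 0 < a) (hℓ : 0 < ℓ) (hρ : ℓ * a + a ≤ ρ)
    (hp : p < ρ - a + ℓ * a) (hpast : ∀ k < p, V k = 0)
    (hfuture : ∀ k, p + ℓ * a ≤ k → k < ρ + p / a * a → V k = 0) : V p = 0 := by
  have hℓρ : ℓ * a ≤ ρ := by omega
  rcases lt_or_ge p ρ with hpρ | hρp
  · have hdiv := Nat.div_add_mod' p a
    have hmod := Nat.mod_lt p ha
    have hcard : #(Finset.Ico p (p / a * a + a) ∪
        Finset.Ico (ρ + p / a * a - a) (ρ + p - a)) ≤ a := by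
      refine (Finset.card_union_le _ _).trans ?_
      simp only [Nat.card_Ico]
      omega
    refine hV.apply_eq_zero_of_lt hZ (hV.subword_eq_zero_of_burst hZ hC hℓρ hpast hfuture)
      ha hℓ hℓρ hpρ hcard (fun k hk _ hk_lt => hpast k ?_)
      fun k hk hk_le hk_lt => hfuture k ?_ hk_lt
    all_goals
      simp only [Finset.mem_union, Finset.mem_Ico] at hk
      omega
  · exact hV.apply_eq_zero_of_le hZ hℓρ hρp hp hpast

theorem apply_eq_zero_of_card_le
    (hV : ParityChecks (leftHalf Z) (rightHalf Z) C V) (hZ : IsZeroBandMDS Z)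
    (hC : IsSuperregular C) (ha : 0 < a) (hℓ : 0 < ℓ) (hρ : ℓ * a ≤ ρ)
    (hp : p < ρ - a + ℓ * a) (hpast : ∀ k < p, V k = 0) {K : Finset ℕ} (hK : #K ≤ a)
    (hK_zero : ∀ k ∉ K, k < ρ + p / a * a → V k = 0) : V p = 0 := by
  rcases lt_or_ge p ρ with hpρ | hρp
  · have hsub := hV.subword_eq_zero_of_card_le hC hℓ hρ hK fun k hk hkρ =>
      hK_zero k hk (by omega)
    have hblock : p / a * a + a ≤ ρ + p / a * a := by
      have := Nat.le_mul_of_pos_left a hℓ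
      omega
    exact hV.apply_eq_zero_of_lt hZ hsub ha hℓ hρ hpρ hK
      (fun k hk _ hk_lt => hK_zero k hk (by omega)) fun k hk _ => hK_zero k hk
  · exact hV.apply_eq_zero_of_le hZ hρ hρp hp hpast

end ParityChecks

end ConstructionOne

theorem isStreamingCode_sde_constructionOne {F : Type*} [Field F] {a q ℓ m τ : ℕ} (ha : 0 < a)
    (haq : a ≤ q) (hℓ : 0 < ℓ) (hℓm : ℓ ≤ m) (hτ : τ + 1 = m * q + a)
    {Z : Matrix (Fin a) (Fin (2 * a)) F} (hZ : IsZeroBandMDS Z)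
    {C : Matrix (Fin (ℓ * a)) (Fin ((m + 1) * a - ℓ * a)) F} (hC : IsSuperregular C) :
    IsStreamingCode a (ℓ * q) τ
      (sde (LinearMap.ker (constructionOneH F a ℓ ((m + 1) * a) ha
          (leftHalf Z) (rightHalf Z) C).mulVecLin : Set (Fin ((m + 1) * a - a + ℓ * a) → F))
        fun i => blockPlacement a q i) := by
  have hσ := strictMono_blockPlacement ha haq
  have hρ : ℓ * a + a ≤ (m + 1) * a := by rw [add_one_mul]; gcongr
  refine isStreamingCode_sde (hσ.comp Fin.val_strictMono) _ fun v hv p hpast herased => ?_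
  let V : ℕ → F := Function.extend Fin.val v 0
  have hV_apply : ∀ i : Fin ((m + 1) * a - a + ℓ * a), V i = v i :=
    Fin.val_injective.extend_apply v 0
  have hV : ParityChecks (leftHalf Z) (rightHalf Z) C V :=
    parityChecks_of_mulVec_eq_zero ha _ _ C hℓ (by omega) (by simpa [hV_apply] using hv)
  have hV_past : ∀ k < (p : ℕ), V k = 0 := fun k hk => by
    refine extend_zero_apply_eq_zero ?_
    rintro i rfl
    exact hpast i hk
  have hwindow : ∀ k < (m + 1) * a + p / a * a,
      blockPlacement a q k ≤ blockPlacement a q p + τ := fun k hk => by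
    have := blockPlacement_lt_of_lt_mul (q := q) ha hk
    omega
  rw [← hV_apply]
  obtain ⟨K, hK, hK_zero⟩ | hburst := herased
  · refine hV.apply_eq_zero_of_card_le hZ hC ha hℓ (by omega) p.isLt hV_past
      (K := K.map Fin.valEmbedding) (by rwa [Finset.card_map]) fun k hkK hk =>
      extend_zero_apply_eq_zero ?_
    rintro i rfl
    exact hK_zero i (fun hi => hkK (Finset.mem_map_of_mem _ hi)) (hwindow i hk)
  · refine hV.apply_eq_zero_of_burst hZ hC ha hℓ hρ p.isLt hV_past fun k hpk hk =>
      extend_zero_apply_eq_zero ?_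
    rintro i rfl
    refine hburst i ?_ (hwindow i hk)
    exact (blockPlacement_add_mul ha p ℓ).symm.trans_le (hσ.monotone hpk)

theorem sde_constructionOne_is_streaming_code_general {F : Type*} [Field F] {a b τ g ℓ m : ℕ}
    (ha : 0 < a) (hbτ : b ≤ τ) (hb : b = ℓ * (a + g)) (hτ : τ + 1 - a = m * (a + g)) (hℓ : 0 < ℓ)
    {Z : Matrix (Fin a) (Fin (2 * a)) F} (hZ : IsZeroBandMDS Z)
    {C : Matrix (Fin (ℓ * a)) (Fin ((m + 1) * a - ℓ * a)) F} (hC : IsSuperregular C) :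
    IsStreamingCode a b τ
        (sde (LinearMap.ker (constructionOneH F a ℓ ((m + 1) * a) ha
            (leftHalf Z) (rightHalf Z) C).mulVecLin : Set (Fin ((m + 1) * a - a + ℓ * a) → F))
          fun i => blockPlacement a (a + g) i) ∧
      ((m * a : ℕ) : ℚ) / (((m + ℓ) * a : ℕ) : ℚ) =
        ((τ + 1 - a : ℕ) : ℚ) / ((τ + 1 - a + b : ℕ) : ℚ) := by
  have haτ : a ≤ τ := by
    have := Nat.le_mul_of_pos_left (a + g) hℓ
    omega
  have hℓm : ℓ ≤ m := by
    have : ℓ * (a + g) < (m + 1) * (a + g) := by rw [add_one_mul]; omega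
    exact Nat.le_of_lt_succ (Nat.lt_of_mul_lt_mul_right this)
  constructor
  · rw [hb]
    exact isStreamingCode_sde_constructionOne ha (Nat.le_add_right a g) hℓ hℓm (by omega) hZ hC
  · rw [hτ, hb, ← add_mul]
    push_cast
    rw [mul_div_mul_right _ _ (by positivity), mul_div_mul_right _ _ (by positivity)]

/-- For `gcd(b, τ+1−a) = a+g ≥ a`, `ℓ = b/(a+g)`,
`m = (τ+1−a)/(a+g)`, SDE of the code with parity-check matrix
`H = constructionOneH` (Construction 1 with `ρ = (m+1)a`, `r = ℓa`,
`n = (m+ℓ)a`) with placement set `S_{a,b,τ}` (whose increasing enumeration is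
`σ(j) = (j/a)(a+g) + (j mod a)`) and dispersion span `N = (m+ℓ−1)(a+g)+a` is
an `(a,b,τ)` streaming code of optimal rate `(τ+1−a)/(τ+1−a+b)`. -/
theorem sde_constructionOne_is_streaming_code
    (F : Type*) [Field F] (a b τ g ℓ m : ℕ)
    (ha : 0 < a) (hab : a ≤ b) (hbτ : b ≤ τ)
    (hgcd : Nat.gcd b (τ + 1 - a) = a + g)
    (hb : b = ℓ * (a + g)) (hτ : τ + 1 - a = m * (a + g))
    (hℓ : 0 < ℓ) (hm : 0 < m)
    (Z : Matrix (Fin a) (Fin (2 * a)) F)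
    (hZband : ∀ (i : Fin a) (j : Fin (2 * a)),
        (∃ s : ℕ, 1 ≤ s ∧ s ≤ a - 1 ∧ (j : ℕ) = ((i : ℕ) + s) % (2 * a)) → Z i j = 0)
    (hZMDS : ∀ cols : Finset (Fin (2 * a)), cols.card = a →
        LinearIndependent F (fun j : cols => fun u => Z u (j : Fin (2 * a))))
    (Z1 Z2 : Matrix (Fin a) (Fin a) F)
    (hZ1 : ∀ (i j : Fin a), Z1 i j = Z i ⟨(j : ℕ), by have := j.isLt; omega⟩)
    (hZ2 : ∀ (i j : Fin a), Z2 i j = Z i ⟨a + (j : ℕ), by have := j.isLt; omega⟩)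
    (C : Matrix (Fin (ℓ * a)) (Fin ((m + 1) * a - ℓ * a)) F)
    (hC : ∀ (s : ℕ) (ri : Fin s → Fin (ℓ * a)) (ci : Fin s → Fin ((m + 1) * a - ℓ * a)),
        Function.Injective ri → Function.Injective ci →
        (C.submatrix ri ci).det ≠ 0) :
    -- SDE(ker H, S_{a,b,τ}) is an (a,b,τ) streaming code
    (∀ (t : ℤ) (E : Finset ℤ), (↑E ⊆ Set.Icc t (t + (τ : ℤ))) → t ∈ E →
        (E.card ≤ a ∨ ∀ e ∈ E, e ≤ t + (b : ℤ) - 1) →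
        ∀ x y : ℤ → (Fin ((m + 1) * a - a + ℓ * a) → F),
          (∀ s : ℤ,
              (constructionOneH F a ℓ ((m + 1) * a) ha Z1 Z2 C).mulVec
                (fun i => x (s + ((((i : ℕ) / a) * (a + g) + (i : ℕ) % a : ℕ) : ℤ)) i) = 0) →
          (∀ s : ℤ,
              (constructionOneH F a ℓ ((m + 1) * a) ha Z1 Z2 C).mulVec
                (fun i => y (s + ((((i : ℕ) / a) * (a + g) + (i : ℕ) % a : ℕ) : ℤ)) i) = 0) →
          (∀ t' : ℤ, t' < t → x t' = y t') →
          (∀ t' : ℤ, t' ∈ Set.Icc t (t + (τ : ℤ)) → t' ∉ E → x t' = y t') →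
          x t = y t)
    ∧
    -- the rate k/n is the optimal rate (τ+1−a)/(τ+1−a+b)
    ((m * a : ℕ) : ℚ) / (((m + ℓ) * a : ℕ) : ℚ)
      = ((τ + 1 - a : ℕ) : ℚ) / ((τ + 1 - a + b : ℕ) : ℚ) := by
  obtain rfl : Z1 = leftHalf Z := Matrix.ext hZ1
  obtain rfl : Z2 = rightHalf Z := Matrix.ext hZ2
  exact sde_constructionOne_is_streaming_code_general ha hbτ hb hτ hℓ ⟨hZband, hZMDS⟩ hC
end

section
/- Let A be a k×t super-regular matrix over a field F. Then every set of k columns of the k×(k+t) matrix [I_k | A] is linearly independent; equivalently, [I_k | A] is a generator matrix of a [k+t, k] MDS code, and also the code {c ∈ F^{k+t} : [I_k | A]c = 0} is a [k+t, t] MDS code. -/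
open scoped Classical

/-!
A nonzero vector `y` cannot be sparse together with `A *ᵥ y`: otherwise `A *ᵥ y` has at least as
many zeros as `y` has nonzero entries, and these positions select a square submatrix of `A`
killing the nonzero restriction of `y` to its support. Kernel vectors of `[I | A]` are `(-A y, y)`
and row space vectors are `(w, w A)`, so both distance bounds follow from this, for `A` and `Aᵀ`
respectively. A linear relation among at most `k` columns is a kernel vector of weight at most
`k`.
-/

open Matrix nonZeroDivisors

section MDS

variable {R m n ι κ : Type*}

/-- A super-regular matrix over a commutative ring: all its minors are non-zero-divisors, which over
a field means that all its square submatrices are invertible. Rows and columns are selected by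
injections, not necessarily increasing, as reordering only changes the sign of a minor. -/
def IsSuperRegular [CommRing R] (A : Matrix m n R) : Prop :=
  ∀ (s : ℕ) (r : Fin s → m) (c : Fin s → n), Function.Injective r → Function.Injective c →
    (A.submatrix r c).det ∈ R⁰

section HammingNorm

variable [Zero R] [DecidableEq R] [Fintype m] [Fintype n] [Fintype ι] [Fintype κ]

theorem hammingNorm_comp_equiv (e : ι ≃ κ) (x : κ → R) : hammingNorm (x ∘ e) = hammingNorm x := by
  simp only [hammingNorm, Finset.card_filter, Function.comp_apply]
  exact e.sum_comp fun k => if x k ≠ 0 then 1 else 0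

theorem hammingNorm_sumElim (x : m → R) (y : n → R) :
    hammingNorm (Sum.elim x y) = hammingNorm x + hammingNorm y := by
  simp only [hammingNorm, Finset.card_filter, Fintype.sum_sum_type]
  rfl

end HammingNorm

theorem submatrix_mulVec_comp_of_injective [NonUnitalNonAssocSemiring R] [Fintype n] [Fintype κ]
    (A : Matrix m n R) (r : ι → m) {c : κ → n} (hc : Function.Injective c) {y : n → R}
    (hy : ∀ j ∉ Set.range c, y j = 0) : A.submatrix r c *ᵥ (y ∘ c) = (A *ᵥ y) ∘ r := by
  funext i
  exact Fintype.sum_of_injective c hc _ (fun j => A (r i) j * y j)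
    (fun j hj => by rw [hy j hj, mul_zero]) fun _ => rfl

theorem linearIndependent_col_of_card_le [CommRing R] [DecidableEq R] [Fintype ι]
    {G : Matrix m ι R} {d : ℕ} (hG : ∀ c : ι → R, G *ᵥ c = 0 → c ≠ 0 → d < hammingNorm c)
    {s : Finset ι} (hs : s.card ≤ d) : LinearIndependent R fun j : s => G.col j := by
  rw [Fintype.linearIndependent_iff]
  intro g hg
  let c : ι → R := Function.extend ((↑) : s → ι) g 0
  have c_val (j : s) : c j = g j := Subtype.val_injective.extend_apply _ _ j
  have c_eq_zero : ∀ j ∉ s, c j = 0 := fun j hj =>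
    Function.extend_apply' _ _ j fun ⟨i, hi⟩ => hj (hi ▸ i.2)
  have c_mem_ker : G *ᵥ c = 0 := by
    rw [← Function.comp_id (G *ᵥ c), ← submatrix_mulVec_comp_of_injective G id
      Subtype.val_injective (c := ((↑) : s → ι)) (by simpa using c_eq_zero), ← hg]
    funext i
    simp [mulVec, dotProduct, c_val, mul_comm]
  have support_subset : Finset.univ.filter (fun j => c j ≠ 0) ⊆ s := fun j hj =>
    not_imp_comm.1 (c_eq_zero j) (Finset.mem_filter.1 hj).2
  have weight_le : hammingNorm c ≤ d := (Finset.card_le_card support_subset).trans hs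
  have c_zero : c = 0 := by
    by_contra h
    exact (hG c c_mem_ker h).not_ge weight_le
  exact fun j => by rw [← c_val, c_zero, Pi.zero_apply]

namespace IsSuperRegular

variable [CommRing R] {A : Matrix m n R}

theorem transpose (hA : IsSuperRegular A) : IsSuperRegular Aᵀ := fun s r c hr hc => by
  rw [← transpose_submatrix, det_transpose]
  exact hA s c r hc hr

theorem det_submatrix_mem_nonZeroDivisors [Fintype ι] [DecidableEq ι] (hA : IsSuperRegular A)
    (r : ι ↪ m) (c : ι ↪ n) : (A.submatrix r c).det ∈ R⁰ := by
  let e := Fintype.equivFin ι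
  rw [← det_submatrix_equiv_self e.symm, submatrix_submatrix]
  exact hA _ _ _ (r.injective.comp e.symm.injective) (c.injective.comp e.symm.injective)

variable [DecidableEq R] [Fintype m] [Fintype n]

theorem card_lt_hammingNorm_mulVec_add (hA : IsSuperRegular A) {y : n → R} (hy : y ≠ 0) :
    Fintype.card m < hammingNorm (A *ᵥ y) + hammingNorm y := by
  by_contra! h
  have card_le : Fintype.card {j // y j ≠ 0} ≤ Fintype.card {i // (A *ᵥ y) i = 0} := by
    have card_compl : Fintype.card {i // (A *ᵥ y) i ≠ 0} =
        Fintype.card m - Fintype.card {i // (A *ᵥ y) i = 0} := Fintype.card_subtype_compl _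
    simp only [hammingNorm, ← Fintype.card_subtype] at h
    omega
  obtain ⟨f⟩ := Function.Embedding.nonempty_of_card_le card_le
  let r : {j // y j ≠ 0} ↪ m := f.trans (.subtype _)
  let c : {j // y j ≠ 0} ↪ n := .subtype _
  have restrict_mem_ker : A.submatrix r c *ᵥ (y ∘ c) = 0 := by
    rw [submatrix_mulVec_comp_of_injective A r c.injective (by simp [c])]
    exact funext fun j => (f j).2
  have restrict_eq_zero : y ∘ c = 0 :=
    eq_zero_of_det_mem_nonZeroDivisors_of_mulVec_eq_zero
      (hA.det_submatrix_mem_nonZeroDivisors r c) restrict_mem_ker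
  obtain ⟨j, hj⟩ := Function.ne_iff.1 hy
  exact hj (congrFun restrict_eq_zero ⟨j, hj⟩)

theorem card_lt_hammingNorm_vecMul_add (hA : IsSuperRegular A) {w : m → R} (hw : w ≠ 0) :
    Fintype.card n < hammingNorm (w ᵥ* A) + hammingNorm w := by
  rw [← mulVec_transpose]
  exact hA.transpose.card_lt_hammingNorm_mulVec_add hw

variable [DecidableEq m]

theorem card_lt_hammingNorm_of_fromCols_one_mulVec_eq_zero (hA : IsSuperRegular A)
    {c : m ⊕ n → R} (hc : fromCols 1 A *ᵥ c = 0) (hc0 : c ≠ 0) :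
    Fintype.card m < hammingNorm c := by
  obtain ⟨x, y, rfl⟩ : ∃ x y, c = Sum.elim x y := ⟨_, _, (Sum.elim_comp_inl_inr c).symm⟩
  rw [fromCols_mulVec_sumElim, one_mulVec] at hc
  obtain rfl : x = -(A *ᵥ y) := eq_neg_of_add_eq_zero_left hc
  have hy : y ≠ 0 := by
    rintro rfl
    simp at hc0
  have norm_neg : hammingNorm (-(A *ᵥ y)) = hammingNorm (A *ᵥ y) :=
    hammingNorm_comp (fun _ => Neg.neg) (fun _ => neg_injective) fun _ => neg_zero
  rw [hammingNorm_sumElim, norm_neg]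
  exact hA.card_lt_hammingNorm_mulVec_add hy

theorem card_lt_hammingNorm_vecMul_fromCols_one (hA : IsSuperRegular A) {w : m → R} (hw : w ≠ 0) :
    Fintype.card n < hammingNorm (w ᵥ* fromCols (1 : Matrix m m R) A) := by
  rw [vecMul_fromCols, vecMul_one, hammingNorm_sumElim, add_comm]
  exact hA.card_lt_hammingNorm_vecMul_add hw

end IsSuperRegular

theorem identity_superregular_is_MDS_general [CommRing R] [DecidableEq R] [Fintype m]
    [DecidableEq m] [Fintype n] [Fintype ι] (e : m ⊕ n ≃ ι) {A : Matrix m n R}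
    (hA : IsSuperRegular A) {G : Matrix m ι R} (hG : G.submatrix id e = fromCols 1 A) :
    (∀ cols : Finset ι, cols.card = Fintype.card m →
      LinearIndependent R fun j : cols => G.col j) ∧
    (∀ v ∈ Submodule.span R (Set.range G.row), v ≠ 0 → Fintype.card n < hammingNorm v) ∧
    (∀ c : ι → R, G *ᵥ c = 0 → c ≠ 0 → Fintype.card m < hammingNorm c) := by
  have kernel_weight (c : ι → R) (hc : G *ᵥ c = 0) (hc0 : c ≠ 0) :
      Fintype.card m < hammingNorm c := by
    rw [← hammingNorm_comp_equiv e]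
    apply hA.card_lt_hammingNorm_of_fromCols_one_mulVec_eq_zero
    · rw [← hG, submatrix_mulVec_equiv, Function.comp_assoc, e.self_comp_symm,
        Function.comp_id, Function.comp_id, hc]
    · exact fun h => hc0 (e.surjective.injective_comp_right h)
  refine ⟨fun cols hcols => linearIndependent_col_of_card_le kernel_weight hcols.le, ?_,
    kernel_weight⟩
  intro v hv hv0
  rw [← range_vecMulLinear] at hv
  obtain ⟨w, rfl⟩ := hv
  have hw : w ≠ 0 := by
    rintro rfl
    exact hv0 (map_zero _)
  rw [vecMulLinear_apply, ← hammingNorm_comp_equiv e]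
  have comp_eq : (w ᵥ* G) ∘ e = w ᵥ* fromCols 1 A := by rw [← hG]; rfl
  rw [comp_eq]
  exact hA.card_lt_hammingNorm_vecMul_fromCols_one hw

end MDS

/-- If `A` is a `k × t` super-regular matrix, then every set of
`k` columns of `G = [I_k | A]` is linearly independent; equivalently `G`
generates a `[k+t, k]` MDS code (every nonzero vector of its row space has
Hamming weight ≥ t+1), and the code `{c : G c = 0}` is a `[k+t, t]` MDS code
(every nonzero codeword has Hamming weight ≥ k+1). -/
theorem identity_superregular_is_MDS
    (F : Type*) [Field F] (k t : ℕ)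
    (A : Matrix (Fin k) (Fin t) F)
    (hA : ∀ (s : ℕ) (ri : Fin s → Fin k) (ci : Fin s → Fin t),
        Function.Injective ri → Function.Injective ci →
        (A.submatrix ri ci).det ≠ 0)
    (G : Matrix (Fin k) (Fin (k + t)) F)
    (hG : ∀ (u : Fin k) (v : Fin (k + t)),
        G u v = if h : (v : ℕ) < k then (if (u : ℕ) = (v : ℕ) then 1 else 0)
                else A u ⟨(v : ℕ) - k, by have := v.isLt; omega⟩) :
    (∀ cols : Finset (Fin (k + t)), cols.card = k →
        LinearIndependent F (fun j : cols => fun u => G u (j : Fin (k + t)))) ∧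
    (∀ v : Fin (k + t) → F, v ∈ Submodule.span F (Set.range G) → v ≠ 0 →
        t + 1 ≤ (Finset.univ.filter (fun j : Fin (k + t) => v j ≠ 0)).card) ∧
    (∀ c : Fin (k + t) → F, G.mulVec c = 0 → c ≠ 0 →
        k + 1 ≤ (Finset.univ.filter (fun j : Fin (k + t) => c j ≠ 0)).card) := by
  have hA' : IsSuperRegular A := fun s r c hr hc => mem_nonZeroDivisors_of_ne_zero (hA s r c hr hc)
  have hG' : G.submatrix id finSumFinEquiv = fromCols 1 A := by
    ext u (v | v) <;> simp [hG, one_apply, Fin.ext_iff]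
  simpa only [Fintype.card_fin] using! identity_superregular_is_MDS_general finSumFinEquiv hA' hG'
end
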